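/- Under the block setup and outer setup, assume S_0 ≼ B_D ≼ (1+C²)·S_0 in the Loewner order for some C > 0, and let ε_1,…,ε_m satisfy 0 < ε_min ≤ ε_s ≤ ε_max for all s. With Σ_ε = diag(ε_1 I_{n_1},…,ε_m I_{n_m}) and S_ε = Σ_ε B_D + Q + S_0, every eigenvalue μ of the pencil (S_ε, B_D + Q) (i.e., every μ with S_ε ψ = μ (B_D+Q) ψ for some ψ ≠ 0) satisfies min{ε_min + 1/(1+C²), 1} ≤ μ ≤ 1 + ε_max. -/

import Mathlib

open Matrix

/-- The all-ones vector `e` in `ℝ^k`. -/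
noncomputable def onesV (k : ℕ) : Fin k → ℝ := fun _ => 1

/-- The rank-one block `Q_s = (1/d_s²) (M_s e_s)(M_s e_s)ᵀ`, where `d_s² = e_sᵀ M_s e_s`. -/
noncomputable def Qblk {k : ℕ} (M : Matrix (Fin k) (Fin k) ℝ) : Matrix (Fin k) (Fin k) ℝ :=
  (onesV k ⬝ᵥ M.mulVec (onesV k))⁻¹ • vecMulVec (M.mulVec (onesV k)) (M.mulVec (onesV k))

/-!
An eigenvalue of a pencil `(S, T)` with `T` positive definite is a Rayleigh quotient of `S` with
respect to `T`, so `a • T ≤ S ≤ b • T` in the Loewner order confines it to `[a, b]`. For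
`T = B_D + Q` and `S = Σ_ε B_D + Q + S₀` these bounds follow by adding up
`ε_min B_D ≤ Σ_ε B_D ≤ ε_max B_D` and `(1 + C²)⁻¹ B_D ≤ S₀ ≤ B_D`. Positive definiteness of `T` is
checked blockwise: `Q_s e_s = M_s e_s ≠ 0`, so `Q_s` is injective on `ker B_s = span {e_s}`.
-/

section OrderedModule

variable {K V : Type*} [AddCommGroup V] [PartialOrder V] [IsOrderedAddMonoid V] {B Q E S : V}

lemma min_smul_add_le_add_add [Field K] [LinearOrder K] [IsStrictOrderedRing K] [Module K V]
    [IsOrderedModule K V] {a κ : K} (hκ : 0 < κ) (hB : 0 ≤ B) (hQ : 0 ≤ Q) (hE : a • B ≤ E)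
    (hS : B ≤ κ • S) : min (a + κ⁻¹) 1 • (B + Q) ≤ E + Q + S := by
  have hS' : κ⁻¹ • B ≤ S := (inv_smul_le_iff_of_pos hκ).2 hS
  calc min (a + κ⁻¹) 1 • (B + Q)
      = min (a + κ⁻¹) 1 • B + min (a + κ⁻¹) 1 • Q := smul_add _ _ _
    _ ≤ (a + κ⁻¹) • B + (1 : K) • Q := by
        gcongr
        · exact min_le_left _ _
        · exact min_le_right _ _
    _ = a • B + Q + κ⁻¹ • B := by module
    _ ≤ E + Q + S := by gcongr

lemma add_add_le_one_add_smul_add [CommRing K] [Preorder K] [Module K V] [PosSMulMono K V] {b : K}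
    (hb : 0 ≤ b) (hQ : 0 ≤ Q) (hE : E ≤ b • B) (hS : S ≤ B) :
    E + Q + S ≤ (1 + b) • (B + Q) :=
  calc E + Q + S ≤ b • B + Q + B := by gcongr
    _ ≤ b • B + Q + B + b • Q := le_add_of_nonneg_right (smul_nonneg hb hQ)
    _ = (1 + b) • (B + Q) := by module

end OrderedModule

section BlockDiagonal

variable {ι : Type*} {n : ι → Type*} [Fintype ι] [DecidableEq ι] [∀ i, Fintype (n i)]

section MulVec

variable {R : Type*} [NonUnitalNonAssocSemiring R]

lemma blockDiagonal'_mulVec_apply (M : ∀ i, Matrix (n i) (n i) R) (v : (Σ i, n i) → R)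
    (i : ι) (j : n i) : (blockDiagonal' M *ᵥ v) ⟨i, j⟩ = (M i *ᵥ fun k ↦ v ⟨i, k⟩) j := by
  simp only [mulVec, dotProduct, Fintype.sum_sigma]
  rw [Fintype.sum_eq_single i fun k hk ↦ Finset.sum_eq_zero fun l _ ↦ by
    rw [blockDiagonal'_apply_ne _ _ _ hk.symm, zero_mul]]
  simp only [blockDiagonal'_apply_eq]

lemma dotProduct_blockDiagonal'_mulVec (M : ∀ i, Matrix (n i) (n i) R) (v w : (Σ i, n i) → R) :
    v ⬝ᵥ blockDiagonal' M *ᵥ w =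
      ∑ i, (fun j ↦ v ⟨i, j⟩) ⬝ᵥ M i *ᵥ fun j ↦ w ⟨i, j⟩ := by
  simp only [dotProduct, Fintype.sum_sigma, blockDiagonal'_mulVec_apply]

end MulVec

lemma blockDiagonal'_smul_one_mul {R A : Type*} [Semiring A] [Monoid R]
    [DistribMulAction R A] [IsScalarTower R A A] [∀ i, DecidableEq (n i)] (c : ι → R)
    (M : ∀ i, Matrix (n i) (n i) A) :
    blockDiagonal' (fun i ↦ c i • (1 : Matrix (n i) (n i) A)) * blockDiagonal' M =
      blockDiagonal' fun i ↦ c i • M i := by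
  simp only [← blockDiagonal'_mul, smul_mul, Matrix.one_mul]

end BlockDiagonal

section BlockDefinite

variable {ι R : Type*} {n : ι → Type*} [Finite ι] [DecidableEq ι] [∀ i, Finite (n i)]
  [Ring R] [PartialOrder R] [StarRing R] [IsOrderedAddMonoid R] {M : ∀ i, Matrix (n i) (n i) R}

lemma posSemidef_blockDiagonal' (hM : ∀ i, (M i).PosSemidef) :
    (blockDiagonal' M).PosSemidef := by
  have := Fintype.ofFinite ι
  have (i : ι) := Fintype.ofFinite (n i)
  refine .of_dotProduct_mulVec_nonneg (isHermitian_blockDiagonal'_iff.2 fun i ↦ (hM i).isHermitian)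
    fun v ↦ ?_
  rw [dotProduct_blockDiagonal'_mulVec]
  exact Finset.sum_nonneg fun i _ ↦ (hM i).dotProduct_mulVec_nonneg _

lemma posDef_blockDiagonal' (hM : ∀ i, (M i).PosDef) : (blockDiagonal' M).PosDef := by
  have := Fintype.ofFinite ι
  have (i : ι) := Fintype.ofFinite (n i)
  refine .of_dotProduct_mulVec_pos (isHermitian_blockDiagonal'_iff.2 fun i ↦ (hM i).isHermitian)
    fun v hv ↦ ?_
  obtain ⟨⟨i, j⟩, hij⟩ := Function.ne_iff.1 hv
  rw [dotProduct_blockDiagonal'_mulVec]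
  exact Finset.sum_pos' (fun k _ ↦ (hM k).posSemidef.dotProduct_mulVec_nonneg _)
    ⟨i, Finset.mem_univ i, (hM i).dotProduct_mulVec_pos fun h ↦ hij (congrFun h j)⟩

end BlockDefinite

section Qblk

variable {k : ℕ} {M : Matrix (Fin k) (Fin k) ℝ}

lemma posSemidef_Qblk (hM : M.PosSemidef) : (Qblk M).PosSemidef :=
  (posSemidef_vecMulVec_self_star (M *ᵥ onesV k)).smul
    (inv_nonneg.2 (hM.dotProduct_mulVec_nonneg (onesV k)))

lemma Qblk_mulVec_onesV (h : onesV k ⬝ᵥ M *ᵥ onesV k ≠ 0) :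
    Qblk M *ᵥ onesV k = M *ᵥ onesV k := by
  rw [Qblk, smul_mulVec, vecMulVec_mulVec, op_smul_eq_smul, dotProduct_comm (M *ᵥ _),
    inv_smul_smul₀ h]

lemma disjoint_span_onesV_ker_Qblk (hM : M.PosDef) :
    Disjoint (Submodule.span ℝ {onesV k}) (LinearMap.ker (Qblk M).mulVecLin) := by
  refine (Submodule.disjoint_span_singleton.2 fun hmem ↦ ?_).symm
  by_contra hone
  have hd : onesV k ⬝ᵥ M *ᵥ onesV k ≠ 0 := (hM.dotProduct_mulVec_pos hone).ne'
  have hQ : Qblk M *ᵥ onesV k = 0 := hmem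
  exact hd (by rw [← Qblk_mulVec_onesV hd, hQ, dotProduct_zero])

end Qblk

section Loewner

open scoped ComplexOrder MatrixOrder

variable {𝕜 ι : Type*} [RCLike 𝕜]

section Pencil

variable {n : Type*} [Fintype n] {A B S T : Matrix n n 𝕜} {v : n → 𝕜}

lemma star_dotProduct_mulVec_mono (h : A ≤ B) (v : n → 𝕜) :
    star v ⬝ᵥ A *ᵥ v ≤ star v ⬝ᵥ B *ᵥ v := by
  simpa only [sub_mulVec, dotProduct_sub, sub_nonneg] using
    (le_iff.1 h).dotProduct_mulVec_nonneg v

lemma posDef_add_of_disjoint_ker (hA : A.PosSemidef) (hB : B.PosSemidef)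
    (hAB : Disjoint (LinearMap.ker A.mulVecLin) (LinearMap.ker B.mulVecLin)) :
    (A + B).PosDef := by
  refine .of_dotProduct_mulVec_pos (hA.add hB).isHermitian fun v hv ↦ ?_
  have hA₀ := hA.dotProduct_mulVec_nonneg v
  have hB₀ := hB.dotProduct_mulVec_nonneg v
  rw [add_mulVec, dotProduct_add]
  refine (add_nonneg hA₀ hB₀).lt_of_ne' fun h ↦ hv ?_
  obtain ⟨hAv, hBv⟩ := (add_eq_zero_iff_of_nonneg hA₀ hB₀).1 h
  exact Submodule.disjoint_def.1 hAB v ((hA.dotProduct_mulVec_zero_iff v).1 hAv)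
    ((hB.dotProduct_mulVec_zero_iff v).1 hBv)

lemma pencil_eigenvalue_mem_Icc {a b : ℝ} {μ : 𝕜} (hT : T.PosDef) (ha : a • T ≤ S)
    (hb : S ≤ b • T) (hv : v ≠ 0) (h : S *ᵥ v = μ • T *ᵥ v) : μ ∈ Set.Icc (a : 𝕜) b := by
  have hpos : 0 < star v ⬝ᵥ T *ᵥ v := hT.dotProduct_mulVec_pos hv
  have hform (c : ℝ) : star v ⬝ᵥ (c • T) *ᵥ v = c * (star v ⬝ᵥ T *ᵥ v) := by
    rw [smul_mulVec, dotProduct_smul, RCLike.real_smul_eq_coe_mul]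
  have hS : star v ⬝ᵥ S *ᵥ v = μ * (star v ⬝ᵥ T *ᵥ v) := by
    rw [h, dotProduct_smul, smul_eq_mul]
  constructor
  · refine le_of_mul_le_mul_right ?_ hpos
    rw [← hform, ← hS]
    exact star_dotProduct_mulVec_mono ha v
  · refine le_of_mul_le_mul_right ?_ hpos
    rw [← hform, ← hS]
    exact star_dotProduct_mulVec_mono hb v

end Pencil

section Block

variable {n : ι → Type*} [DecidableEq ι]

lemma blockDiagonal'_mono [Finite ι] [∀ i, Finite (n i)] {M N : ∀ i, Matrix (n i) (n i) 𝕜}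
    (h : ∀ i, M i ≤ N i) : blockDiagonal' M ≤ blockDiagonal' N := by
  rw [le_iff, ← blockDiagonal'_sub]
  exact posSemidef_blockDiagonal' h

theorem stmt9_general [Fintype ι] [∀ i, Fintype (n i)] [∀ i, DecidableEq (n i)]
    {B Q : ∀ i, Matrix (n i) (n i) 𝕜}
    (hB : ∀ i, (B i).PosSemidef) (hQ : ∀ i, (Q i).PosSemidef)
    (hBQ : ∀ i, Disjoint (LinearMap.ker (B i).mulVecLin) (LinearMap.ker (Q i).mulVecLin))
    {S₀ : Matrix (Σ i, n i) (Σ i, n i) 𝕜} {κ : ℝ} (hκ : 0 < κ)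
    (hS₀_le : S₀ ≤ blockDiagonal' B) (hle_S₀ : blockDiagonal' B ≤ κ • S₀)
    {ε : ι → ℝ} {εmin εmax : ℝ} (hε : ∀ i, εmin ≤ ε i ∧ ε i ≤ εmax) (hεmax : 0 ≤ εmax)
    {μ : 𝕜} {ψ : (Σ i, n i) → 𝕜} (hψ : ψ ≠ 0)
    (heig : (blockDiagonal' (fun i ↦ ε i • (1 : Matrix (n i) (n i) 𝕜)) * blockDiagonal' B +
      blockDiagonal' Q + S₀) *ᵥ ψ = μ • (blockDiagonal' B + blockDiagonal' Q) *ᵥ ψ) :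
    μ ∈ Set.Icc ((min (εmin + κ⁻¹) 1 : ℝ) : 𝕜) ((1 + εmax : ℝ) : 𝕜) := by
  have hBD : 0 ≤ blockDiagonal' B := (posSemidef_blockDiagonal' hB).nonneg
  have hQD : 0 ≤ blockDiagonal' Q := (posSemidef_blockDiagonal' hQ).nonneg
  have hT : (blockDiagonal' B + blockDiagonal' Q).PosDef := by
    rw [← blockDiagonal'_add]
    exact posDef_blockDiagonal' fun i ↦ posDef_add_of_disjoint_ker (hB i) (hQ i) (hBQ i)
  rw [blockDiagonal'_smul_one_mul] at heig
  have hE_ge : εmin • blockDiagonal' B ≤ blockDiagonal' fun i ↦ ε i • B i := by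
    rw [← blockDiagonal'_smul]
    exact blockDiagonal'_mono fun i ↦ smul_le_smul_of_nonneg_right (hε i).1 (hB i).nonneg
  have hE_le : (blockDiagonal' fun i ↦ ε i • B i) ≤ εmax • blockDiagonal' B := by
    rw [← blockDiagonal'_smul]
    exact blockDiagonal'_mono fun i ↦ smul_le_smul_of_nonneg_right (hε i).2 (hB i).nonneg
  exact pencil_eigenvalue_mem_Icc hT (min_smul_add_le_add_add hκ hBD hQD hE_ge hle_S₀)
    (add_add_le_one_add_smul_add hεmax hQD hE_le hS₀_le) hψ heig

end Block

end Loewner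

/-- eigenvalue bounds for the pencil `(S_ε, B_D+Q)`:
`min{ε_min + 1/(1+C²), 1} ≤ μ ≤ 1 + ε_max`. -/
theorem stmt9
    (m : ℕ) (hm : 1 ≤ m) (ns : Fin m → ℕ) (hns : ∀ s, 0 < ns s)
    (M Bb : ∀ s : Fin m, Matrix (Fin (ns s)) (Fin (ns s)) ℝ)
    (hM : ∀ s, (M s).PosDef) (hBb : ∀ s, (Bb s).PosSemidef)
    (hker : ∀ s, LinearMap.ker (Bb s).mulVecLin = Submodule.span ℝ {onesV (ns s)})
    (n0 : ℕ) (hn0 : 1 ≤ n0)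
    (A : Matrix ((Σ s, Fin (ns s)) ⊕ Fin n0) ((Σ s, Fin (ns s)) ⊕ Fin n0) ℝ)
    (hA : A.PosDef)
    (BD Q : Matrix (Σ s, Fin (ns s)) (Σ s, Fin (ns s)) ℝ)
    (hBD : BD = blockDiagonal' Bb)
    (hQ : Q = blockDiagonal' fun s => Qblk (M s))
    (B : Matrix (Σ s, Fin (ns s)) ((Σ s, Fin (ns s)) ⊕ Fin n0) ℝ)
    (hB : B = fromCols BD 0)
    (S0 : Matrix (Σ s, Fin (ns s)) (Σ s, Fin (ns s)) ℝ)
    (hS0 : S0 = B * A⁻¹ * Bᵀ)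
    (C : ℝ) (hC : 0 < C)
    (hLoe1 : (BD - S0).PosSemidef)
    (hLoe2 : ((1 + C ^ 2) • S0 - BD).PosSemidef)
    (ε : Fin m → ℝ) (εmin εmax : ℝ) (hεmin : 0 < εmin)
    (hε : ∀ s, εmin ≤ ε s ∧ ε s ≤ εmax)
    (Sig Sε : Matrix (Σ s, Fin (ns s)) (Σ s, Fin (ns s)) ℝ)
    (hSig : Sig = blockDiagonal' fun s => ε s • (1 : Matrix (Fin (ns s)) (Fin (ns s)) ℝ))
    (hSε : Sε = Sig * BD + Q + S0)
    (μ : ℝ) (ψ : (Σ s, Fin (ns s)) → ℝ) (hψ : ψ ≠ 0)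
    (heig : Sε.mulVec ψ = μ • (BD + Q).mulVec ψ) :
    min (εmin + 1 / (1 + C ^ 2)) 1 ≤ μ ∧ μ ≤ 1 + εmax := by
  subst hBD hQ hS0 hSig hSε
  have hεmax : 0 ≤ εmax := hεmin.le.trans ((hε ⟨0, hm⟩).1.trans (hε ⟨0, hm⟩).2)
  rw [one_div]
  exact stmt9_general hBb (fun s ↦ posSemidef_Qblk (hM s).posSemidef)
    (fun s ↦ hker s ▸ disjoint_span_onesV_ker_Qblk (hM s)) (by positivity) hLoe1 hLoe2 hε hεmax
    hψ heig
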